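/- For any n ≥ 2, no optimal set of n-means for P contains a point of the open interval (1/4, 1/2). -/

import Mathlib

open MeasureTheory Set
open scoped ENNReal Classical

noncomputable section

/-- The similarity map `S₁(x) = x/4`. -/
def S1 (x : ℝ) : ℝ := x / 4

/-- The similarity map `S₂(x) = x/2 + 1/2`. -/
def S2 (x : ℝ) : ℝ := x / 2 + 1 / 2

/-- `P` satisfies the self-similarity relation `P = (1/4)·P∘S₁⁻¹ + (3/4)·P∘S₂⁻¹`. -/
def SelfSimilar (P : Measure ℝ) : Prop :=
  P = (1/4 : ℝ≥0∞) • P.map S1 + (3/4 : ℝ≥0∞) • P.map S2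

/-- For a word `σ` over `{1,2}` (encoded as `Fin 2`, `0 ↦ S₁`, `1 ↦ S₂`),
the composition `S_σ = S_{σ₁} ∘ ⋯ ∘ S_{σ_k}`. -/
def Sw : List (Fin 2) → ℝ → ℝ
  | [] => id
  | i :: σ => (if i = 0 then S1 else S2) ∘ Sw σ

/-- `p_σ`, the product of the probabilities `p₁ = 1/4`, `p₂ = 3/4` along `σ`. -/
def pw : List (Fin 2) → ℝ
  | [] => 1
  | i :: σ => (if i = 0 then (1:ℝ)/4 else 3/4) * pw σ

/-- `s_σ`, the product of the contraction ratios `s₁ = 1/4`, `s₂ = 1/2` along `σ`. -/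
def sw : List (Fin 2) → ℝ
  | [] => 1
  | i :: σ => (if i = 0 then (1:ℝ)/4 else 1/2) * sw σ

/-- `c(σ)`, the number of occurrences of the symbol `1` (encoded `0`) in `σ`. -/
def cnt (σ : List (Fin 2)) : ℕ := σ.count 0

/-- The cylinder interval `J_σ = S_σ([0,1])`. -/
def J (σ : List (Fin 2)) : Set ℝ := Sw σ '' Set.Icc 0 1

/-- The distortion error `V(P;α) = ∫ min_{a ∈ α} (x-a)² dP`. -/
def distortion (P : Measure ℝ) (α : Finset ℝ) : ℝ :=
  ∫ x, sInf ((fun a => (x - a) ^ 2) '' (α : Set ℝ)) ∂P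

/-- The `n`-th quantization error `V_n`. -/
def qError (P : Measure ℝ) (n : ℕ) : ℝ :=
  sInf {e | ∃ α : Finset ℝ, α.Nonempty ∧ α.card ≤ n ∧ e = distortion P α}

/-- `α` is an optimal set of `n`-means for `P`. -/
def IsOptimal (P : Measure ℝ) (n : ℕ) (α : Finset ℝ) : Prop :=
  α.Nonempty ∧ α.card ≤ n ∧ distortion P α = qError P n

/-- `q_σ := P(J_σ) · λ(J_σ)²`. -/
def qnt (P : Measure ℝ) (σ : List (Fin 2)) : ℝ :=
  (P (J σ)).toReal * ((volume (J σ)).toReal) ^ 2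


/-- nearest squared distance -/
def md (α : Finset ℝ) (x : ℝ) : ℝ := sInf ((fun a => (x - a) ^ 2) '' (α : Set ℝ))

lemma distortion_eq (P : Measure ℝ) (α : Finset ℝ) : distortion P α = ∫ x, md α x ∂P := rfl

lemma md_le {α : Finset ℝ} {a : ℝ} (ha : a ∈ α) (x : ℝ) : md α x ≤ (x - a) ^ 2 :=
  csInf_le ⟨0, by rintro _ ⟨b, _, rfl⟩; positivity⟩ ⟨a, by simpa using ha, rfl⟩

lemma le_md {α : Finset ℝ} (h : α.Nonempty) {x c : ℝ} (hc : ∀ a ∈ α, c ≤ (x - a) ^ 2) :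
    c ≤ md α x := by
  refine le_csInf ((Finset.coe_nonempty.mpr h).image _) ?_
  rintro _ ⟨b, hb, rfl⟩
  exact hc b (by simpa using hb)

lemma md_nonneg (α : Finset ℝ) (x : ℝ) : 0 ≤ md α x :=
  Real.sInf_nonneg (by rintro _ ⟨b, _, rfl⟩; positivity)

lemma md_exists {α : Finset ℝ} (h : α.Nonempty) (x : ℝ) : ∃ a ∈ α, md α x = (x - a) ^ 2 := by
  obtain ⟨a, ha, hm⟩ := Finset.exists_min_image α (fun a => (x - a) ^ 2) h
  exact ⟨a, ha, le_antisymm (md_le ha x) (le_md h hm)⟩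

lemma md_cont {α : Finset ℝ} (h : α.Nonempty) : Continuous (md α) := by
  have : md α = fun x => α.inf' h (fun a => (x - a) ^ 2) := by
    funext x
    refine le_antisymm ?_ ?_
    · exact Finset.le_inf' _ _ (fun a ha => md_le ha x)
    · exact le_md h (fun a ha => Finset.inf'_le (fun a => (x - a) ^ 2) ha)
  rw [this]
  exact Continuous.finset_inf'_apply h (fun a _ => by fun_prop)

lemma S1_cont : Continuous S1 := by unfold S1; fun_prop
lemma S2_cont : Continuous S2 := by unfold S2; fun_prop

lemma P_apply {P : Measure ℝ} (hP : SelfSimilar P) {A : Set ℝ} (hA : MeasurableSet A) :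
    P A = (1/4 : ℝ≥0∞) * P (S1 ⁻¹' A) + (3/4 : ℝ≥0∞) * P (S2 ⁻¹' A) := by
  conv_lhs => rw [hP]
  simp only [Measure.add_apply, Measure.smul_apply, smul_eq_mul]
  rw [Measure.map_apply S1_cont.measurable hA, Measure.map_apply S2_cont.measurable hA]

lemma quarter_add : (1/4 : ℝ≥0∞) + 3/4 = 1 := by
  rw [ENNReal.div_add_div_same]
  norm_num
  exact ENNReal.div_self (by norm_num) (by norm_num)

lemma P_le_of {P : Measure ℝ} (hP : SelfSimilar P) {A B : Set ℝ} (hA : MeasurableSet A)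
    (h1 : S1 ⁻¹' A ⊆ B) (h2 : S2 ⁻¹' A ⊆ B) : P A ≤ P B := by
  rw [P_apply hP hA]
  calc _ ≤ (1/4 : ℝ≥0∞) * P B + (3/4 : ℝ≥0∞) * P B := by gcongr
    _ = P B := by rw [← add_mul, quarter_add, one_mul]

lemma tail_zero (P : Measure ℝ) [IsProbabilityMeasure P] (T : ℝ → Set ℝ)
    (hT : ∀ d, MeasurableSet (T d)) (hmono : ∀ d e, d ≤ e → T e ⊆ T d)
    (hinter : ⋂ k : ℕ, T k = ∅) (hstep : ∀ d, 0 < d → P (T d) ≤ P (T (2 * d)))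
    (d : ℝ) (hd : 0 < d) : P (T d) = 0 := by
  have h1 : ∀ k : ℕ, P (T d) ≤ P (T (2 ^ k * d)) := by
    intro k
    induction k with
    | zero => simp
    | succ k ih =>
      refine ih.trans ((hstep _ (by positivity)).trans_eq ?_)
      congr 2; ring
  have h2 : Filter.Tendsto (fun k : ℕ => P (T k)) Filter.atTop (nhds (P (⋂ k : ℕ, T k))) := by
    refine tendsto_measure_iInter_atTop (fun i => (hT _).nullMeasurableSet) ?_ ⟨0, measure_ne_top _ _⟩
    intro i j hij
    exact hmono _ _ (by exact_mod_cast hij)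
  rw [hinter, measure_empty] at h2
  have h3 : ∀ k : ℕ, P (T d) ≤ P (T k) := by
    intro k
    have : Filter.Tendsto (fun j : ℕ => (2:ℝ) ^ j * d) Filter.atTop Filter.atTop :=
      (tendsto_pow_atTop_atTop_of_one_lt (by norm_num)).atTop_mul_const hd
    obtain ⟨j, hj⟩ := (this.eventually_ge_atTop (k:ℝ)).exists
    exact (h1 j).trans (measure_mono (hmono _ _ hj))
  exact le_antisymm (ge_of_tendsto' h2 h3) zero_le

lemma ae_mem {P : Measure ℝ} [IsProbabilityMeasure P] (hP : SelfSimilar P) :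
    ∀ᵐ x ∂P, 0 ≤ x ∧ x ≤ 1 := by
  have hlow : ∀ d : ℝ, 0 < d → P (Iio (-d)) = 0 := by
    refine tail_zero P (fun d => Iio (-d)) (fun d => measurableSet_Iio) ?_ ?_ ?_
    · intro d e h x hx; simp only [mem_Iio] at *; linarith
    · ext x; simp only [mem_iInter, mem_Iio, mem_empty_iff_false, iff_false, not_forall, not_lt]
      obtain ⟨k, hk⟩ := exists_nat_ge (-x); exact ⟨k, by linarith⟩
    · intro d hd
      refine P_le_of hP measurableSet_Iio ?_ ?_
      · intro x hx; simp only [mem_preimage, mem_Iio, S1] at *; linarith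
      · intro x hx; simp only [mem_preimage, mem_Iio, S2] at *; linarith
  have hhigh : ∀ d : ℝ, 0 < d → P (Ioi (1 + d)) = 0 := by
    refine tail_zero P (fun d => Ioi (1 + d)) (fun d => measurableSet_Ioi) ?_ ?_ ?_
    · intro d e h x hx; simp only [mem_Ioi] at *; linarith
    · ext x; simp only [mem_iInter, mem_Ioi, mem_empty_iff_false, iff_false, not_forall, not_lt]
      obtain ⟨k, hk⟩ := exists_nat_ge (x - 1); exact ⟨k, by linarith⟩
    · intro d hd
      refine P_le_of hP measurableSet_Ioi ?_ ?_
      · intro x hx; simp only [mem_preimage, mem_Ioi, S1] at *; linarith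
      · intro x hx; simp only [mem_preimage, mem_Ioi, S2] at *; linarith
  have h1 : ∀ k : ℕ, ∀ᵐ x ∂P, -(1 / ((k:ℝ) + 1)) ≤ x ∧ x ≤ 1 + 1 / ((k:ℝ) + 1) := by
    intro k
    have hk : 0 < 1 / ((k:ℝ) + 1) := by positivity
    have a1 := measure_eq_zero_iff_ae_notMem.mp (hlow _ hk)
    have a2 := measure_eq_zero_iff_ae_notMem.mp (hhigh _ hk)
    filter_upwards [a1, a2] with x b1 b2
    simp only [mem_Iio, mem_Ioi, not_lt] at b1 b2
    exact ⟨b1, b2⟩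
  filter_upwards [ae_all_iff.mpr h1] with x hx
  have ht := tendsto_one_div_add_atTop_nhds_zero_nat (𝕜 := ℝ)
  constructor
  · have := le_of_tendsto' ht.neg (fun k => (hx k).1)
    simpa using this
  · have := ge_of_tendsto' (ht.const_add 1) (fun k => (hx k).2)
    simpa using this

lemma integ {P : Measure ℝ} [IsProbabilityMeasure P] (hP : SelfSimilar P) {f : ℝ → ℝ}
    (hf : Continuous f) : Integrable f P := by
  obtain ⟨C, hC⟩ := (isCompact_Icc (a := (0:ℝ)) (b := 1)).exists_bound_of_continuousOn hf.continuousOn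
  refine Integrable.of_bound hf.aestronglyMeasurable C ?_
  filter_upwards [ae_mem hP] with x hx
  exact hC x hx

lemma E_mono {P : Measure ℝ} [IsProbabilityMeasure P] (hP : SelfSimilar P) {f g : ℝ → ℝ}
    (hf : Continuous f) (hg : Continuous g) (h : ∀ x, 0 ≤ x → x ≤ 1 → f x ≤ g x) :
    ∫ x, f x ∂P ≤ ∫ x, g x ∂P := by
  refine integral_mono_ae (integ hP hf) (integ hP hg) ?_
  filter_upwards [ae_mem hP] with x hx
  exact h x hx.1 hx.2

lemma E_split {P : Measure ℝ} [IsProbabilityMeasure P] (hP : SelfSimilar P) {f : ℝ → ℝ}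
    (hf : Continuous f) :
    ∫ x, f x ∂P = 1/4 * ∫ x, f (x / 4) ∂P + 3/4 * ∫ x, f (x / 2 + 1/2) ∂P := by
  have i1 : Integrable f (P.map S1) :=
    (integrable_map_measure hf.aestronglyMeasurable S1_cont.aemeasurable).mpr
      (integ hP (hf.comp S1_cont))
  have i2 : Integrable f (P.map S2) :=
    (integrable_map_measure hf.aestronglyMeasurable S2_cont.aemeasurable).mpr
      (integ hP (hf.comp S2_cont))
  conv_lhs => rw [hP]
  rw [integral_add_measure (i1.smul_measure (by finiteness)) (i2.smul_measure (by finiteness)),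
    integral_smul_measure, integral_smul_measure,
    integral_map S1_cont.aemeasurable hf.aestronglyMeasurable,
    integral_map S2_cont.aemeasurable hf.aestronglyMeasurable]
  simp [S1, S2]

lemma E_quad0 {P : Measure ℝ} [IsProbabilityMeasure P] (hP : SelfSimilar P) (A B C : ℝ) :
    ∫ x, (A * x ^ 2 + B * x + C) ∂P = A * ∫ x, x ^ 2 ∂P + B * ∫ x, x ∂P + C := by
  rw [integral_add (integ hP (by fun_prop)) (integ hP (by fun_prop)),
    integral_add (integ hP (by fun_prop)) (integ hP (by fun_prop)),
    integral_const_mul, integral_const_mul]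
  simp

lemma E_one {P : Measure ℝ} [IsProbabilityMeasure P] (hP : SelfSimilar P) :
    ∫ x, x ∂P = 2/3 := by
  have h := E_split hP (f := fun x => x) (by fun_prop)
  have h1 : ∫ x, x / 4 ∂P = 1/4 * ∫ x, x ∂P := by
    rw [← integral_const_mul]; congr 1; ext x; ring
  have h2 : ∫ x, (x / 2 + 1/2) ∂P = 1/2 * ∫ x, x ∂P + 1/2 := by
    have := E_quad0 hP 0 (1/2) (1/2)
    simp only [zero_mul, zero_add] at this
    rw [← this]; congr 1; ext x; ring
  rw [h1, h2] at h
  linarith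

lemma E_two {P : Measure ℝ} [IsProbabilityMeasure P] (hP : SelfSimilar P) :
    ∫ x, x ^ 2 ∂P = 28/51 := by
  have h := E_split hP (f := fun x => x ^ 2) (by fun_prop)
  have h1 : ∫ x, (x / 4) ^ 2 ∂P = 1/16 * ∫ x, x ^ 2 ∂P := by
    rw [← integral_const_mul]; congr 1; ext x; ring
  have h2 : ∫ x, (x / 2 + 1/2) ^ 2 ∂P = 1/4 * ∫ x, x ^ 2 ∂P + 1/2 * ∫ x, x ∂P + 1/4 := by
    rw [← E_quad0 hP]; congr 1; ext x; ring
  rw [h1, h2, E_one hP] at h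
  linarith

lemma E_le {P : Measure ℝ} [IsProbabilityMeasure P] (hP : SelfSimilar P) {f : ℝ → ℝ}
    (hf : Continuous f) (A B C : ℝ) (h : ∀ x, 0 ≤ x → x ≤ 1 → f x ≤ A * x ^ 2 + B * x + C) :
    ∫ x, f x ∂P ≤ A * (28/51) + B * (2/3) + C := by
  rw [← E_two hP, ← E_one hP, ← E_quad0 hP]
  exact E_mono hP hf (by fun_prop) h

lemma E_ge {P : Measure ℝ} [IsProbabilityMeasure P] (hP : SelfSimilar P) {f : ℝ → ℝ}
    (hf : Continuous f) (A B C : ℝ) (h : ∀ x, 0 ≤ x → x ≤ 1 → A * x ^ 2 + B * x + C ≤ f x) :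
    A * (28/51) + B * (2/3) + C ≤ ∫ x, f x ∂P := by
  rw [← E_two hP, ← E_one hP, ← E_quad0 hP]
  exact E_mono hP (by fun_prop) hf h

/-- pieces of the distortion -/
lemma E_split4 {P : Measure ℝ} [IsProbabilityMeasure P] (hP : SelfSimilar P) {f : ℝ → ℝ}
    (hf : Continuous f) :
    ∫ x, f x ∂P = 1/16 * ∫ x, f (x / 16) ∂P + 3/16 * ∫ x, f (x / 8 + 1/8) ∂P
      + 3/16 * ∫ x, f (x / 8 + 1/2) ∂P + 9/16 * ∫ x, f (x / 4 + 3/4) ∂P := by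
  rw [E_split hP hf, E_split hP (f := fun x => f (x / 4)) (by fun_prop),
    E_split hP (f := fun x => f (x / 2 + 1/2)) (by fun_prop)]
  have e1 : (fun x : ℝ => f (x / 4 / 4)) = fun x => f (x / 16) := by ext x; congr 1; ring
  have e2 : (fun x : ℝ => f ((x / 2 + 1/2) / 4)) = fun x => f (x / 8 + 1/8) := by
    ext x; congr 1; ring
  have e3 : (fun x : ℝ => f (x / 4 / 2 + 1/2)) = fun x => f (x / 8 + 1/2) := by
    ext x; congr 1; ring
  have e4 : (fun x : ℝ => f ((x / 2 + 1/2) / 2 + 1/2)) = fun x => f (x / 4 + 3/4) := by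
    ext x; congr 1; ring
  rw [e1, e2, e3, e4]
  ring

lemma P_not_finite {P : Measure ℝ} [IsProbabilityMeasure P] (hP : SelfSimilar P) :
    ∀ (n : ℕ) (β : Finset ℝ), β.card = n → ¬ ∀ᵐ x ∂P, x ∈ β := by
  intro n
  induction n using Nat.strong_induction_on with
  | _ n ih =>
    intro β hβ h
    have h0 : P ((β : Set ℝ)ᶜ) = 0 := h
    rw [P_apply hP β.finite_toSet.measurableSet.compl] at h0
    simp only [add_eq_zero, mul_eq_zero] at h0
    have k1 : ∀ᵐ x ∂P, x / 4 ∈ β := by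
      have : P (S1 ⁻¹' (β : Set ℝ)ᶜ) = 0 := h0.1.resolve_left (by simp)
      exact this
    have k2 : ∀ᵐ x ∂P, x / 2 + 1/2 ∈ β := by
      have : P (S2 ⁻¹' (β : Set ℝ)ᶜ) = 0 := h0.2.resolve_left (by simp)
      exact this
    by_cases hc : ∀ x ∈ β, x ≤ 1/4
    · have : ∀ᵐ x ∂P, False := by
        filter_upwards [ae_mem hP, k2] with x hx h2
        have := hc _ h2
        linarith
      exact IsProbabilityMeasure.ne_zero P (by simpa using this)
    · push Not at hc
      obtain ⟨y, hy, hy4⟩ := hc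
      have hlt : ((β.filter (fun x => x ≤ 1/4)).image (fun x => 4 * x)).card < n := by
        refine Finset.card_image_le.trans_lt ?_
        rw [← hβ]
        exact Finset.card_lt_card (Finset.filter_ssubset.mpr ⟨y, hy, by linarith⟩)
      refine ih _ hlt _ rfl ?_
      filter_upwards [ae_mem hP, k1] with x hx h1
      refine Finset.mem_image.mpr ⟨x / 4, Finset.mem_filter.mpr ⟨h1, by linarith⟩, by ring⟩

lemma md_insert_le (β : Finset ℝ) (h : β.Nonempty) (y x : ℝ) : md (insert y β) x ≤ md β x :=
  le_md h (fun _ ha => md_le (Finset.mem_insert_of_mem ha) x)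

lemma ae_eq_of_le {P : Measure ℝ} [IsProbabilityMeasure P] (hP : SelfSimilar P) {f g : ℝ → ℝ}
    (hf : Continuous f) (hg : Continuous g) (h : ∀ᵐ x ∂P, f x ≤ g x)
    (hi : ∫ x, g x ∂P ≤ ∫ x, f x ∂P) : f =ᵐ[P] g := by
  refine (integral_eq_iff_of_ae_le (integ hP hf) (integ hP hg) h).mp (le_antisymm ?_ hi)
  exact integral_mono_ae (integ hP hf) (integ hP hg) h

lemma strict {P : Measure ℝ} [IsProbabilityMeasure P] (hP : SelfSimilar P) (β : Finset ℝ)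
    (h : β.Nonempty) : ∃ y, distortion P (insert y β) < distortion P β := by
  by_contra hcon
  push Not at hcon
  have key : ∀ y, ∀ᵐ x ∂P, md β x ≤ (x - y) ^ 2 := by
    intro y
    have hn : (insert y β).Nonempty := Finset.insert_nonempty _ _
    have e : (md (insert y β)) =ᵐ[P] md β := by
      exact ae_eq_of_le hP (md_cont hn) (md_cont h) (Filter.Eventually.of_forall (md_insert_le β h y)) (hcon y)
    filter_upwards [e] with x hx
    rw [← hx]
    exact md_le (Finset.mem_insert_self _ _) x
  have key2 : ∀ᵐ x ∂P, ∀ q : ℚ, md β x ≤ (x - q) ^ 2 := ae_all_iff.mpr (fun q => key q)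
  refine P_not_finite hP _ β rfl ?_
  filter_upwards [key2] with x hx
  have h0 : md β x ≤ 0 := by
    have hd : DenseRange ((↑) : ℚ → ℝ) := Rat.denseRange_cast
    have : ∀ y : ℝ, md β x ≤ (x - y) ^ 2 := fun y =>
      hd.induction_on (p := fun y => md β x ≤ (x - y) ^ 2) y
        (isClosed_le continuous_const (by fun_prop)) hx
    simpa using this x
  obtain ⟨a, ha, hm⟩ := md_exists h x
  have : x - a = 0 := by
    have : (x - a) ^ 2 = 0 := le_antisymm (hm ▸ h0) (sq_nonneg _)
    simpa using this
  rw [show x = a by linarith]; exact ha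

/-- optimality, in comparison form -/
def Opt (P : Measure ℝ) (n : ℕ) (α : Finset ℝ) : Prop :=
  α.Nonempty ∧ α.card ≤ n ∧
    ∀ β : Finset ℝ, β.Nonempty → β.card ≤ n → ∫ x, md α x ∂P ≤ ∫ x, md β x ∂P

lemma opt_of {P : Measure ℝ} {n : ℕ} {α : Finset ℝ} (h : IsOptimal P n α) : Opt P n α := by
  obtain ⟨h1, h2, h3⟩ := h
  refine ⟨h1, h2, fun β hβ hc => ?_⟩
  rw [← distortion_eq, ← distortion_eq, h3]
  refine csInf_le ⟨0, ?_⟩ ⟨β, hβ, hc, rfl⟩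
  rintro _ ⟨γ, _, _, rfl⟩
  exact integral_nonneg (fun x => md_nonneg γ x)

lemma ae_gap {P : Measure ℝ} [IsProbabilityMeasure P] (hP : SelfSimilar P) :
    ∀ᵐ x ∂P, (0 ≤ x ∧ x ≤ 1/4) ∨ (1/2 ≤ x ∧ x ≤ 1) := by
  have h0 : P (Icc (0:ℝ) 1)ᶜ = 0 := ae_mem hP
  have h : P ((Icc (0:ℝ) (1/4) ∪ Icc (1/2) 1)ᶜ) ≤ P (Icc (0:ℝ) 1)ᶜ := by
    refine P_le_of hP (measurableSet_Icc.union measurableSet_Icc).compl ?_ ?_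
    · intro x hx hx'
      refine hx (Or.inl ?_)
      simp only [mem_Icc, S1] at *
      constructor <;> linarith
    · intro x hx hx'
      refine hx (Or.inr ?_)
      simp only [mem_Icc, S2] at *
      constructor <;> linarith
  rw [h0] at h
  exact le_antisymm h zero_le

lemma no_swap {P : Measure ℝ} [IsProbabilityMeasure P] (hP : SelfSimilar P) {n : ℕ}
    {α : Finset ℝ} (hα : Opt P n α) {a b c : ℝ} (ha : a ∈ α) (hb : b ∈ α) (hba : b ≠ a)
    (h : ∀ᵐ x ∂P, (x - c) ^ 2 < (x - a) ^ 2 ∨ (x - b) ^ 2 ≤ (x - a) ^ 2) : False := by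
  obtain ⟨h1, h2, h3⟩ := hα
  have hbe : b ∈ α.erase a := Finset.mem_erase.mpr ⟨hba, hb⟩
  have hne : (α.erase a).Nonempty := ⟨b, hbe⟩
  have hcard : ∀ y, (insert y (α.erase a)).card ≤ n := by
    intro y
    have := Finset.card_insert_le y (α.erase a)
    have := Finset.card_erase_add_one ha
    omega
  have hle : ∀ᵐ x ∂P, md (insert c (α.erase a)) x ≤ md α x := by
    filter_upwards [h] with x hx
    refine le_md h1 (fun z hz => ?_)
    by_cases hza : z = a
    · subst hza
      rcases hx with hx | hx
      · exact (md_le (Finset.mem_insert_self _ _) x).trans hx.le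
      · exact (md_le (Finset.mem_insert_of_mem hbe) x).trans hx
    · exact md_le (Finset.mem_insert_of_mem (Finset.mem_erase.mpr ⟨hza, hz⟩)) x
  have heq := ae_eq_of_le hP (md_cont (Finset.insert_nonempty _ _)) (md_cont h1) hle
    (h3 _ (Finset.insert_nonempty _ _) (hcard c))
  have hle2 : ∀ᵐ x ∂P, md (α.erase a) x ≤ md α x := by
    filter_upwards [h, heq] with x hx he
    obtain ⟨z, hz, hm⟩ := md_exists h1 x
    by_cases hza : z = a
    · subst hza
      rcases hx with hx | hx
      · exfalso
        have := md_le (Finset.mem_insert_self c (α.erase z)) x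
        linarith
      · rw [hm]; exact (md_le hbe x).trans hx
    · rw [hm]; exact md_le (Finset.mem_erase.mpr ⟨hza, hz⟩) x
  have hD := integral_mono_ae (integ hP (md_cont hne)) (integ hP (md_cont h1)) hle2
  obtain ⟨y, hy⟩ := strict hP _ hne
  rw [distortion_eq, distortion_eq] at hy
  have := h3 _ (Finset.insert_nonempty y _) (hcard y)
  linarith

lemma separated {P : Measure ℝ} [IsProbabilityMeasure P] (hP : SelfSimilar P) {n : ℕ}
    {α : Finset ℝ} (hα : Opt P n α) {a z : ℝ} (ha : a ∈ α) (h1 : 1/4 < a) (h2 : a < 1/2)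
    (hz : z ∈ α) (hza : z ≠ a) : z < 1/2 - a ∨ 1 - a < z := by
  by_contra hcon
  push Not at hcon
  obtain ⟨c1, c2⟩ := hcon
  rcases lt_or_gt_of_ne hza with h | h
  · refine no_swap hP hα (c := 1/2) ha hz hza ?_
    filter_upwards [ae_gap hP] with x hx
    rcases hx with ⟨x1, x2⟩ | ⟨x1, x2⟩
    · right; nlinarith
    · left; nlinarith
  · refine no_swap hP hα (c := 1/4) ha hz hza ?_
    filter_upwards [ae_gap hP] with x hx
    rcases hx with ⟨x1, x2⟩ | ⟨x1, x2⟩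
    · left; nlinarith
    · right; nlinarith

lemma clamp_opt {P : Measure ℝ} [IsProbabilityMeasure P] (hP : SelfSimilar P) {n : ℕ}
    {α : Finset ℝ} (hα : Opt P n α) : Opt P n (α.image (fun x => max 0 (min x 1))) := by
  obtain ⟨h1, h2, h3⟩ := hα
  have hn : (α.image (fun x => max 0 (min x 1))).Nonempty := h1.image _
  refine ⟨hn, Finset.card_image_le.trans h2, fun β hβ hc => ?_⟩
  refine le_trans ?_ (h3 β hβ hc)
  refine E_mono hP (md_cont hn) (md_cont h1) (fun x x0 x1 => ?_)
  refine le_md h1 (fun z hz => ?_)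
  refine (md_le (Finset.mem_image_of_mem _ hz) x).trans ?_
  rcases max_cases 0 (min z 1) with ⟨e, h⟩ | ⟨e, h⟩ <;> rcases min_cases z 1 with ⟨e', h'⟩ | ⟨e', h'⟩ <;>
    nlinarith

lemma E_split3 {P : Measure ℝ} [IsProbabilityMeasure P] (hP : SelfSimilar P) {f : ℝ → ℝ}
    (hf : Continuous f) :
    ∫ x, f x ∂P = 1/4 * ∫ x, f (x / 4) ∂P
      + 3/16 * ∫ x, f (x / 8 + 1/2) ∂P + 9/16 * ∫ x, f (x / 4 + 3/4) ∂P := by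
  rw [E_split4 hP hf, E_split hP (f := fun x => f (x / 4)) (by fun_prop)]
  have e1 : (fun x : ℝ => f (x / 4 / 4)) = fun x => f (x / 16) := by ext x; congr 1; ring
  have e2 : (fun x : ℝ => f ((x / 2 + 1/2) / 4)) = fun x => f (x / 8 + 1/8) := by
    ext x; congr 1; ring
  rw [e1, e2]
  ring

lemma E_lin {P : Measure ℝ} [IsProbabilityMeasure P] (hP : SelfSimilar P) {f g : ℝ → ℝ}
    (hf : Continuous f) (hg : Continuous g) (c : ℝ) :
    ∫ x, (f x + c * g x) ∂P = ∫ x, f x ∂P + c * ∫ x, g x ∂P := by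
  rw [integral_add (integ hP hf) (integ hP (by fun_prop)), integral_const_mul]

/-- `f ≤ g + c h` on `[0,1]` -/
lemma E_le_lin {P : Measure ℝ} [IsProbabilityMeasure P] (hP : SelfSimilar P) {f g h : ℝ → ℝ}
    (hf : Continuous f) (hg : Continuous g) (hh : Continuous h) (c : ℝ)
    (H : ∀ x, 0 ≤ x → x ≤ 1 → f x ≤ g x + c * h x) :
    ∫ x, f x ∂P ≤ ∫ x, g x ∂P + c * ∫ x, h x ∂P := by
  rw [← E_lin hP hg hh]
  exact E_mono hP hf (by fun_prop) H

lemma E_quad {P : Measure ℝ} [IsProbabilityMeasure P] (hP : SelfSimilar P) (s o : ℝ) :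
    ∫ x, (s * x + o) ^ 2 ∂P = s ^ 2 * (16/153) + (s * (2/3) + o) ^ 2 := by
  have : ∀ x : ℝ, (s * x + o) ^ 2 = s ^ 2 * x ^ 2 + 2 * s * o * x + o ^ 2 := fun x => by ring
  simp_rw [this]
  rw [E_quad0 hP, E_two hP, E_one hP]
  ring

/-- left mass function -/
def Phi (P : Measure ℝ) (z : ℝ) : ℝ := ∫ y, max (z - y) 0 ∂P
/-- right mass function -/
def Psi (P : Measure ℝ) (z : ℝ) : ℝ := ∫ y, max (z - (1 - y)) 0 ∂P

lemma Phi1 {P : Measure ℝ} [IsProbabilityMeasure P] (hP : SelfSimilar P) {z : ℝ}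
    (h0 : 0 ≤ z) (h1 : z ≤ 1/2) : Phi P z ≤ z / 6 := by
  unfold Phi
  rw [E_split hP (by fun_prop)]
  have a1 := E_le hP (f := fun x => max (z - x / 4) 0) (by fun_prop) 0 (-z/2) z (by
    intro x x0 x1; refine max_le ?_ ?_ <;> nlinarith)
  have a2 := E_le hP (f := fun x => max (z - (x / 2 + 1/2)) 0) (by fun_prop) 0 0 0 (by
    intro x x0 x1; refine max_le ?_ ?_ <;> nlinarith)
  linarith

lemma Phi2 {P : Measure ℝ} [IsProbabilityMeasure P] (hP : SelfSimilar P) {z : ℝ}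
    (h0 : 1/2 ≤ z) (h1 : z ≤ 1) : Phi P z ≤ (z - 1/3) / 2 := by
  unfold Phi
  rw [E_split hP (by fun_prop)]
  have a1 := E_le hP (f := fun x => max (z - x / 4) 0) (by fun_prop) 0 (-1/4) z (by
    intro x x0 x1; refine max_le ?_ ?_ <;> nlinarith)
  have a2 := E_le hP (f := fun x => max (z - (x / 2 + 1/2)) 0) (by fun_prop)
    0 (-(z - 1/2)) (z - 1/2) (by
    intro x x0 x1; refine max_le ?_ ?_ <;> nlinarith)
  linarith

lemma Phi3 {P : Measure ℝ} [IsProbabilityMeasure P] (hP : SelfSimilar P) {z : ℝ}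
    (h0 : 1 ≤ z) : Phi P z ≤ z - 2/3 := by
  unfold Phi
  have a1 := E_le hP (f := fun x => max (z - x) 0) (by fun_prop) 0 (-1) z (by
    intro x x0 x1; refine max_le ?_ ?_ <;> nlinarith)
  linarith

lemma Psi1 {P : Measure ℝ} [IsProbabilityMeasure P] (hP : SelfSimilar P) {z : ℝ}
    (h0 : 0 ≤ z) (h1 : z ≤ 1/2) : Psi P z ≤ z / 2 := by
  unfold Psi
  rw [E_split hP (by fun_prop)]
  have a1 := E_le hP (f := fun x => max (z - (1 - x / 4)) 0) (by fun_prop) 0 0 0 (by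
    intro x x0 x1; refine max_le ?_ ?_ <;> nlinarith)
  have a2 := E_le hP (f := fun x => max (z - (1 - (x / 2 + 1/2))) 0) (by fun_prop) 0 z 0 (by
    intro x x0 x1; refine max_le ?_ ?_ <;> nlinarith)
  linarith

/-- The three regimes of the bound on `Phi`. -/
lemma Phi_cases {P : Measure ℝ} [IsProbabilityMeasure P] (hP : SelfSimilar P) {u : ℝ}
    (h0 : 0 ≤ u) : (u ≤ 1/8 ∧ Phi P (4 * u) ≤ 2 * u / 3) ∨
      (1/8 ≤ u ∧ u ≤ 1/4 ∧ Phi P (4 * u) ≤ 2 * u - 1/6) ∨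
      (1/4 ≤ u ∧ Phi P (4 * u) ≤ 4 * u - 2/3) := by
  rcases le_total u (1/8) with h | h
  · left; exact ⟨h, (Phi1 hP (by linarith) (by linarith)).trans (by linarith)⟩
  · right
    rcases le_total u (1/4) with h' | h'
    · left; exact ⟨h, h', (Phi2 hP (by linarith) (by linarith)).trans (by linarith)⟩
    · right; exact ⟨h', (Phi3 hP (by linarith))⟩

lemma ineqB1 {s u v : ℝ} (s0 : 0 ≤ s) (s1 : s ≤ 1/8) (v0 : 0 ≤ v) (v1 : v ≤ 1/8 - s)
    (u0 : 0 ≤ u) (u1 : u ≤ 1/8) (us : u ≤ s)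
    (hf : (1/12 + s + v) ^ 2 ≤ (u + 1/4 - 2 * s) / 4 * (2 * u / 3) + (1/4 + 2 * s + v) * v / 2) :
    False := by
  nlinarith [mul_nonneg s0 v0, mul_nonneg s0 u0, mul_nonneg u0 (sub_nonneg.2 us)]

lemma ineqB2 {s u v : ℝ} (s0 : 0 ≤ s) (s1 : s ≤ 1/8) (v0 : 0 ≤ v) (v1 : v ≤ 1/8 - s)
    (u1 : u ≤ 1/8) (us : s ≤ u)
    (hf : (1/12 + s + v) ^ 2 ≤ (u + 1/4 - 2 * s) / 4 * (2 * u / 3) + (1/4 + 2 * s + v) * v / 2)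
    (hh : (u + 1/24 - s) ^ 2 ≤ (u + 1/4 - 2 * s) / 4 * (2 * u / 3) + (1/4 + 2 * s + v) * v / 2) :
    False := by
  have h1 := mul_nonneg s0 v0
  have h2 := sq_nonneg (u - s - 1/16)
  have h3 := sq_nonneg (v - 1/48)
  have h4 := sq_nonneg s
  nlinarith only [hf, hh, h1, h2, h3, h4, s0]

lemma ineqB3 {s u v : ℝ} (s0 : 0 ≤ s) (s1 : s ≤ 1/8) (v0 : 0 ≤ v) (v1 : v ≤ 1/8 - s)
    (u0 : 1/8 ≤ u) (u1 : u ≤ 1/4)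
    (hf : (1/12 + s + v) ^ 2 ≤ (u + 1/4 - 2 * s) / 4 * (2 * u - 1/6) + (1/4 + 2 * s + v) * v / 2)
    (hh : (u + 1/24 - s) ^ 2 ≤ (u + 1/4 - 2 * s) / 4 * (2 * u - 1/6) + (1/4 + 2 * s + v) * v / 2) :
    False := by
  nlinarith [mul_nonneg s0 v0, mul_nonneg s0 (sub_nonneg.2 u0), mul_nonneg v0 (sub_nonneg.2 u0),
    mul_nonneg v0 (sub_nonneg.2 v1), mul_nonneg s0 (sub_nonneg.2 v1),
    mul_nonneg (sub_nonneg.2 u0) (sub_nonneg.2 v1), mul_nonneg (sub_nonneg.2 u0) (sub_nonneg.2 u1),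
    mul_nonneg (sub_nonneg.2 u1) (sub_nonneg.2 v1), mul_nonneg s0 (sub_nonneg.2 u1)]

lemma ineqB4 {s u v : ℝ} (s0 : 0 ≤ s) (s1 : s ≤ 1/8) (v0 : 0 ≤ v) (v1 : v ≤ 1/8 - s)
    (hh : (u + 1/24 - s) ^ 2 ≤ (u + 1/4 - 2 * s) / 4 * (4 * u - 2/3) + (1/4 + 2 * s + v) * v / 2) :
    False := by
  nlinarith [mul_nonneg s0 v0, mul_nonneg v0 (sub_nonneg.2 v1), mul_nonneg s0 (sub_nonneg.2 v1)]

lemma near_l {x z w : ℝ} (h : z ≤ w) (h' : 2 * x ≤ z + w) : (x - z) ^ 2 ≤ (x - w) ^ 2 := by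
  nlinarith [mul_nonneg (sub_nonneg.2 h) (sub_nonneg.2 h')]

lemma near_r {x z w : ℝ} (h : w ≤ z) (h' : z + w ≤ 2 * x) : (x - z) ^ 2 ≤ (x - w) ^ 2 := by
  nlinarith [mul_nonneg (sub_nonneg.2 h) (sub_nonneg.2 h')]

lemma md_repl {α β : Finset ℝ} (hα : α.Nonempty) {a c x d : ℝ}
    (hsub : ∀ z ∈ α, z ≠ a → z ∈ β) (hc : c ∈ β) (hd : 0 ≤ d)
    (h : (x - c) ^ 2 ≤ (x - a) ^ 2 + d) : md β x ≤ md α x + d := by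
  obtain ⟨z, hz, hm⟩ := md_exists hα x
  rw [hm]
  by_cases hza : z = a
  · subst hza; exact (md_le hc x).trans h
  · exact (md_le (hsub z hz hza) x).trans (by linarith)

lemma card_repl {α : Finset ℝ} {n : ℕ} (h : α.card ≤ n) {a : ℝ} (ha : a ∈ α) (y : ℝ) :
    (insert y (α.erase a)).card ≤ n := by
  have := Finset.card_insert_le y (α.erase a)
  have := Finset.card_erase_add_one ha
  omega

lemma mem_repl {α : Finset ℝ} {a y : ℝ} : ∀ z ∈ α, z ≠ a → z ∈ insert y (α.erase a) :=
  fun _ hz hza => Finset.mem_insert_of_mem (Finset.mem_erase.mpr ⟨hza, hz⟩)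

/-- integral upper bound on a piece by a single point -/
lemma piece_le {P : Measure ℝ} [IsProbabilityMeasure P] (hP : SelfSimilar P) {β : Finset ℝ}
    {c : ℝ} (hc : c ∈ β) (s o : ℝ) {f : ℝ → ℝ} (hf : f = fun x => md β (s * x + o)) :
    ∫ x, f x ∂P ≤ s ^ 2 * (16/153) + (s * (2/3) + (o - c)) ^ 2 := by
  subst hf
  rw [← E_quad hP]
  have hcont := md_cont ⟨c, hc⟩
  refine E_mono hP (by fun_prop) (by fun_prop) (fun x _ _ => (md_le hc _).trans_eq (by ring))

lemma piece_ge {P : Measure ℝ} [IsProbabilityMeasure P] (hP : SelfSimilar P) {α : Finset ℝ}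
    (hα : α.Nonempty) (c s o : ℝ) {f : ℝ → ℝ} (hf : f = fun x => md α (s * x + o))
    (h : ∀ x, 0 ≤ x → x ≤ 1 → ∀ z ∈ α, (s * x + o - c) ^ 2 ≤ (s * x + o - z) ^ 2) :
    s ^ 2 * (16/153) + (s * (2/3) + (o - c)) ^ 2 ≤ ∫ x, f x ∂P := by
  subst hf
  rw [← E_quad hP]
  have hcont := md_cont hα
  refine E_mono hP (by fun_prop) (by fun_prop) (fun x x0 x1 => ?_)
  refine le_trans (le_of_eq (by ring)) (le_md hα (h x x0 x1))

/-- lower bound on `J21` by a, b -/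
lemma low21 {P : Measure ℝ} [IsProbabilityMeasure P] (hP : SelfSimilar P) {α : Finset ℝ}
    (hα : α.Nonempty) {a b : ℝ} (ha2 : a < 1/2) (hab : 1 - a < b)
    (sep : ∀ z ∈ α, z ≠ a → z < 1/2 - a ∨ 1 - a < z) (ha1 : 1/4 < a)
    (hb : ∀ z ∈ α, 1 - a < z → b ≤ z) (hb58 : 5/8 ≤ b) :
    (1/8) ^ 2 * (16/153) + (b - 7/12) ^ 2 ≤
      ∫ x, md α (x / 8 + 1/2) ∂P + (b - a) / 4 * Phi P (4 * (a + b - 1)) := by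
  have hcont := md_cont hα
  have e := E_quad hP (1/8) (1/2 - b)
  have := E_le_lin hP (f := fun x => (1/8 * x + (1/2 - b)) ^ 2) (g := fun x => md α (x / 8 + 1/2))
    (h := fun y => max (4 * (a + b - 1) - y) 0) (by fun_prop) (by fun_prop) (by fun_prop)
    ((b - a) / 4) (by
      intro x x0 x1
      obtain ⟨z, hz, hm⟩ := md_exists hα (x / 8 + 1/2)
      rw [hm]
      have hm1 := mul_le_mul_of_nonneg_left (le_max_left (4 * (a + b - 1) - x) 0)
        (show 0 ≤ (b - a) / 4 by linarith)
      have hm2 := mul_nonneg (show 0 ≤ (b - a) / 4 by linarith)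
        (le_max_right (4 * (a + b - 1) - x) 0)
      by_cases hza : z = a
      · subst hza
        nlinarith
      · rcases sep z hz hza with h | h
        · have := near_r (x := x / 8 + 1/2) (z := a) (w := z) (by linarith) (by linarith)
          nlinarith
        · have := near_l (x := x / 8 + 1/2) (z := b) (w := z) (hb z hz h)
            (by linarith [hb z hz h])
          nlinarith)
  rw [e] at this
  unfold Phi
  refine le_trans (le_of_eq ?_) this
  ring

/-- upper bound for the cost of handing over from `a` to `b` on `J21`. -/
lemma up21 {P : Measure ℝ} [IsProbabilityMeasure P] (hP : SelfSimilar P) {α β : Finset ℝ}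
    (hα : α.Nonempty) {a b : ℝ} (hab : a ≤ b)
    (hsub : ∀ z ∈ α, z ≠ a → z ∈ β) (hb : b ∈ β) :
    ∫ x, md β (x / 8 + 1/2) ∂P ≤
      ∫ x, md α (x / 8 + 1/2) ∂P + (b - a) / 4 * Phi P (4 * (a + b - 1)) := by
  have hcont := md_cont hα
  have hcont' := md_cont (α := β) ⟨b, hb⟩
  refine E_le_lin hP (by fun_prop) (by fun_prop) (by fun_prop) _ ?_
  intro x x0 x1
  have hm1 := mul_le_mul_of_nonneg_left (le_max_left (4 * (a + b - 1) - x) 0)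
    (show 0 ≤ (b - a) / 4 by linarith)
  have hm2 := mul_nonneg (show 0 ≤ (b - a) / 4 by linarith)
    (le_max_right (4 * (a + b - 1) - x) 0)
  exact md_repl hα hsub hb hm2 (by nlinarith)

lemma low12 {P : Measure ℝ} [IsProbabilityMeasure P] (hP : SelfSimilar P) {α : Finset ℝ}
    (hα : α.Nonempty) {a e : ℝ} (ha2 : a < 1/2) (hae : e < 1/2 - a)
    (sep : ∀ z ∈ α, z ≠ a → z < 1/2 - a ∨ 1 - a < z) (ha1 : 3/8 ≤ a)
    (he : ∀ z ∈ α, z < 1/2 - a → z ≤ e) :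
    (1/8) ^ 2 * (16/153) + (5/24 - e) ^ 2 ≤
      ∫ x, md α (x / 8 + 1/8) ∂P + (a - e) / 4 * Psi P (4 * (1/2 - a - e)) := by
  have hcont := md_cont hα
  have e0 := E_quad hP (1/8) (1/8 - e)
  have := E_le_lin hP (f := fun x => (1/8 * x + (1/8 - e)) ^ 2) (g := fun x => md α (x / 8 + 1/8))
    (h := fun y => max (4 * (1/2 - a - e) - (1 - y)) 0) (by fun_prop) (by fun_prop) (by fun_prop)
    ((a - e) / 4) (by
      intro x x0 x1
      obtain ⟨z, hz, hm⟩ := md_exists hα (x / 8 + 1/8)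
      rw [hm]
      have hm1 := mul_le_mul_of_nonneg_left (le_max_left (4 * (1/2 - a - e) - (1 - x)) 0)
        (show 0 ≤ (a - e) / 4 by linarith)
      have hm2 := mul_nonneg (show 0 ≤ (a - e) / 4 by linarith)
        (le_max_right (4 * (1/2 - a - e) - (1 - x)) 0)
      by_cases hza : z = a
      · subst hza
        nlinarith
      · rcases sep z hz hza with h | h
        · have := near_r (x := x / 8 + 1/8) (z := e) (w := z) (he z hz h)
            (by linarith [he z hz h])
          nlinarith
        · have := near_l (x := x / 8 + 1/8) (z := a) (w := z) (by linarith) (by linarith)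
          nlinarith)
  rw [e0] at this
  unfold Psi
  refine le_trans (le_of_eq ?_) this
  ring

lemma up12 {P : Measure ℝ} [IsProbabilityMeasure P] (hP : SelfSimilar P) {α β : Finset ℝ}
    (hα : α.Nonempty) {a e : ℝ} (hae : e ≤ a)
    (hsub : ∀ z ∈ α, z ≠ a → z ∈ β) (he : e ∈ β) :
    ∫ x, md β (x / 8 + 1/8) ∂P ≤
      ∫ x, md α (x / 8 + 1/8) ∂P + (a - e) / 4 * Psi P (4 * (1/2 - a - e)) := by
  have hcont := md_cont hα
  have hcont' := md_cont (α := β) ⟨e, he⟩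
  refine E_le_lin hP (by fun_prop) (by fun_prop) (by fun_prop) _ ?_
  intro x x0 x1
  have hm1 := mul_le_mul_of_nonneg_left (le_max_left (4 * (1/2 - a - e) - (1 - x)) 0)
    (show 0 ≤ (a - e) / 4 by linarith)
  have hm2 := mul_nonneg (show 0 ≤ (a - e) / 4 by linarith)
    (le_max_right (4 * (1/2 - a - e) - (1 - x)) 0)
  exact md_repl hα hsub he hm2 (by nlinarith)

/-- `J22` never needs `a`. -/
lemma up22 {P : Measure ℝ} [IsProbabilityMeasure P] (hP : SelfSimilar P) {α β : Finset ℝ}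
    (hα : α.Nonempty) {a b : ℝ} (hab : a ≤ b) (hb1 : b ≤ 1) (ha : a ≤ 1/2)
    (hsub : ∀ z ∈ α, z ≠ a → z ∈ β) (hb : b ∈ β) :
    ∫ x, md β (x / 4 + 3/4) ∂P ≤ ∫ x, md α (x / 4 + 3/4) ∂P := by
  have hcont := md_cont hα
  have hcont' := md_cont (α := β) ⟨b, hb⟩
  refine E_mono hP (by fun_prop) (by fun_prop) ?_
  intro x x0 x1
  have := near_r (x := x / 4 + 3/4) (z := b) (w := a) hab (by linarith)
  have := md_repl (x := x / 4 + 3/4) (d := 0) hα hsub hb le_rfl (by linarith)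
  linarith

lemma up11 {P : Measure ℝ} [IsProbabilityMeasure P] (hP : SelfSimilar P) {α β : Finset ℝ}
    (hα : α.Nonempty) {a e : ℝ} (hae : e ≤ a) (he0 : 0 ≤ e) (ha : 1/4 ≤ a)
    (hsub : ∀ z ∈ α, z ≠ a → z ∈ β) (he : e ∈ β) :
    ∫ x, md β (x / 16) ∂P ≤ ∫ x, md α (x / 16) ∂P := by
  have hcont := md_cont hα
  have hcont' := md_cont (α := β) ⟨e, he⟩
  refine E_mono hP (by fun_prop) (by fun_prop) ?_
  intro x x0 x1
  have := near_l (x := x / 16) (z := e) (w := a) hae (by linarith)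
  have := md_repl (x := x / 16) (d := 0) hα hsub he le_rfl (by linarith)
  linarith

set_option maxHeartbeats 1000000 in
lemma caseB {P : Measure ℝ} [IsProbabilityMeasure P] (hP : SelfSimilar P) {n : ℕ}
    {α : Finset ℝ} (hα : Opt P n α) {a b e : ℝ} (ha : a ∈ α) (hbα : b ∈ α) (heα : e ∈ α)
    (a1 : 3/8 ≤ a) (a2 : a < 1/2) (e0 : 0 ≤ e) (e1 : e < 1/2 - a) (b0 : 1 - a < b) (b1 : b ≤ 1)
    (sep : ∀ z ∈ α, z ≠ a → z < 1/2 - a ∨ 1 - a < z)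
    (he : ∀ z ∈ α, z < 1/2 - a → z ≤ e) (hb : ∀ z ∈ α, 1 - a < z → b ≤ z) : False := by
  obtain ⟨h1, h2, h3⟩ := hα
  have hba : b ≠ a := by intro h; linarith
  have hea : e ≠ a := by intro h; linarith
  have hψ := Psi1 hP (z := 4 * (1/2 - a - e)) (by linarith) (by linarith)
  have hψ' := mul_le_mul_of_nonneg_left hψ (show 0 ≤ (a - e) / 4 by linarith)
  -- option i
  have hi : (5/24 - e) ^ 2 ≤ (b - a) / 4 * Phi P (4 * (a + b - 1)) +
      (a - e) / 4 * Psi P (4 * (1/2 - a - e)) := by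
    have hs := mem_repl (α := α) (a := a) (y := 5/24)
    have hopt := h3 (insert (5/24) (α.erase a)) (Finset.insert_nonempty _ _) (card_repl h2 ha _)
    rw [E_split4 hP (md_cont h1), E_split4 hP (md_cont (Finset.insert_nonempty _ _))] at hopt
    have c1 := up11 hP h1 (by linarith) e0 (by linarith) hs (hs e heα hea)
    have c2 := piece_le hP (Finset.mem_insert_self (5/24) (α.erase a)) (1/8) (1/8)
      (f := fun x => md (insert (5/24) (α.erase a)) (x / 8 + 1/8)) (by ext x; congr 1; ring)
    have c2' := low12 hP h1 a2 e1 sep a1 he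
    have c3 := up21 hP h1 (by linarith) hs (hs b hbα hba)
    have c4 := up22 hP h1 (by linarith) b1 a2.le hs (hs b hbα hba)
    linarith
  have hii : 5/8 ≤ b → (b - 7/12) ^ 2 ≤ (b - a) / 4 * Phi P (4 * (a + b - 1)) +
      (a - e) / 4 * Psi P (4 * (1/2 - a - e)) := by
    intro hb58
    have hs := mem_repl (α := α) (a := a) (y := 7/12)
    have hopt := h3 (insert (7/12) (α.erase a)) (Finset.insert_nonempty _ _) (card_repl h2 ha _)
    rw [E_split4 hP (md_cont h1), E_split4 hP (md_cont (Finset.insert_nonempty _ _))] at hopt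
    have c1 := up11 hP h1 (by linarith) e0 (by linarith) hs (hs e heα hea)
    have c2 := piece_le hP (Finset.mem_insert_self (7/12) (α.erase a)) (1/8) (1/2)
      (f := fun x => md (insert (7/12) (α.erase a)) (x / 8 + 1/2)) (by ext x; congr 1; ring)
    have c2' := low21 hP h1 a2 b0 sep (by linarith) hb hb58
    have c3 := up12 hP h1 (by linarith) hs (hs e heα hea)
    have c4 := up22 hP h1 (by linarith) b1 a2.le hs (hs b hbα hba)
    linarith
  obtain ⟨s, rfl⟩ : ∃ s, a = 3/8 + s := ⟨a - 3/8, by ring⟩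
  obtain ⟨u, rfl⟩ : ∃ u, b = u + 1 - (3/8 + s) := ⟨b - 1 + (3/8 + s), by ring⟩
  obtain ⟨v, rfl⟩ : ∃ v, e = 1/2 - (3/8 + s) - v := ⟨1/2 - (3/8 + s) - e, by ring⟩
  have hu : 3/8 + s + (u + 1 - (3/8 + s)) - 1 = u := by ring
  rw [hu] at hi hii
  have pre : 0 ≤ (u + 1 - (3/8 + s) - (3/8 + s)) / 4 := by linarith
  rcases Phi_cases hP (u := u) (by linarith) with ⟨u1, hφ⟩ | ⟨u0, u1, hφ⟩ | ⟨u0, hφ⟩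
  · have hφ' := mul_le_mul_of_nonneg_left hφ pre
    rcases le_total u s with us | us
    · exact ineqB1 (s := s) (u := u) (v := v) (by linarith) (by linarith) (by linarith)
        (by linarith) (by linarith) u1 us (by linarith only [hφ', hψ', hi])
    · exact ineqB2 (s := s) (u := u) (v := v) (by linarith) (by linarith) (by linarith)
        (by linarith) u1 us (by linarith only [hφ', hψ', hi])
        (by linarith only [hφ', hψ', hii (by linarith)])
  · have hφ' := mul_le_mul_of_nonneg_left hφ pre
    exact ineqB3 (s := s) (u := u) (v := v) (by linarith) (by linarith) (by linarith)
        (by linarith) u0 u1 (by linarith only [hφ', hψ', hi])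
        (by linarith only [hφ', hψ', hii (by linarith)])
  · have hφ' := mul_le_mul_of_nonneg_left hφ pre
    exact ineqB4 (s := s) (u := u) (v := v) (by linarith) (by linarith) (by linarith)
        (by linarith) (by linarith only [hφ', hψ', hii (by linarith)])

lemma caseA {P : Measure ℝ} [IsProbabilityMeasure P] (hP : SelfSimilar P) {n : ℕ}
    {α : Finset ℝ} (hα : Opt P n α) {a e : ℝ} (ha : a ∈ α) (heα : e ∈ α)
    (a1 : 1/4 < a) (a2 : a ≤ 3/8) (e1 : e < 1/2 - a)
    (sep : ∀ z ∈ α, z ≠ a → z < 1/2 - a ∨ 1 - a < z) : False := by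
  obtain ⟨h1, h2, h3⟩ := hα
  have hcont := md_cont h1
  set γ := α.filter (fun z => 1 - a < z) with hγ
  have hcard : (insert (7/12) (insert (1/6) γ)).card ≤ n := by
    have haγ : a ∉ insert e γ := by
      intro h
      rcases Finset.mem_insert.mp h with h | h
      · linarith
      · have := (Finset.mem_filter.mp h).2; linarith
    have heγ : e ∉ γ := by
      intro h
      have := (Finset.mem_filter.mp h).2; linarith
    have hsub : insert a (insert e γ) ⊆ α := by
      intro z hz
      rcases Finset.mem_insert.mp hz with h | h
      · rw [h]; exact ha
      rcases Finset.mem_insert.mp h with h | h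
      · rw [h]; exact heα
      · exact (Finset.mem_filter.mp h).1
    have c := Finset.card_le_card hsub
    rw [Finset.card_insert_of_notMem haγ, Finset.card_insert_of_notMem heγ] at c
    have c1 := Finset.card_insert_le (7/12 : ℝ) (insert (1/6) γ)
    have c2 := Finset.card_insert_le (1/6 : ℝ) γ
    omega
  have hopt := h3 _ (Finset.insert_nonempty _ _) hcard
  rw [E_split3 hP (md_cont h1), E_split3 hP (md_cont (Finset.insert_nonempty _ _))] at hopt
  have m1 : (1/6 : ℝ) ∈ insert (7/12 : ℝ) (insert (1/6) γ) := by simp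
  have m2 : (7/12 : ℝ) ∈ insert (7/12 : ℝ) (insert (1/6) γ) := by simp
  have n1 := piece_le hP m1 (1/4) 0
      (f := fun x => md (insert (7/12) (insert (1/6) γ)) (x / 4)) (by ext x; congr 1; ring)
  have n2 := piece_le hP m2 (1/8) (1/2)
      (f := fun x => md (insert (7/12) (insert (1/6) γ)) (x / 8 + 1/2)) (by ext x; congr 1; ring)
  have hcont' := md_cont (α := insert (7/12) (insert (1/6) γ)) ⟨_, m1⟩
  have n3 : ∫ x, md (insert (7/12) (insert (1/6) γ)) (x / 4 + 3/4) ∂P ≤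
      ∫ x, md α (x / 4 + 3/4) ∂P := by
    refine E_mono hP (by fun_prop) (by fun_prop) (fun x x0 x1 => le_md h1 (fun z hz => ?_))
    by_cases hz1 : 1 - a < z
    · refine md_le ?_ _
      exact Finset.mem_insert_of_mem (Finset.mem_insert_of_mem (Finset.mem_filter.mpr ⟨hz, hz1⟩))
    · refine (md_le m2 _).trans ?_
      have hza : z ≤ a := by
        by_contra h
        rcases sep z hz (by intro h'; exact h h'.le) with h' | h'
        · linarith
        · exact hz1 h'
      exact near_r (by linarith) (by linarith)
  have o2 := piece_ge hP h1 (1 - a) (1/8) (1/2)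
      (f := fun x => md α (x / 8 + 1/2)) (by ext x; congr 1; ring) (by
    intro x x0 x1 z hz
    by_cases hz1 : 1 - a < z
    · exact near_l hz1.le (by linarith)
    · have hza : z ≤ a := by
        by_contra h
        rcases sep z hz (by intro h'; exact h h'.le) with h' | h'
        · linarith
        · exact hz1 h'
      nlinarith)
  rcases le_total a (5/16) with h | h
  · have o1 : 0 ≤ ∫ x, md α (x / 4) ∂P := integral_nonneg (fun x => md_nonneg _ _)
    nlinarith
  · have o1 : 9/16 * ∫ x, md α (x / 16 + 3/16) ∂P ≤ ∫ x, md α (x / 4) ∂P := by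
      rw [E_split4 hP (f := fun x => md α (x / 4)) (by fun_prop)]
      have p1 : 0 ≤ ∫ x, md α (x / 16 / 4) ∂P := integral_nonneg (fun x => md_nonneg _ _)
      have p2 : 0 ≤ ∫ x, md α ((x / 8 + 1/8) / 4) ∂P := integral_nonneg (fun x => md_nonneg _ _)
      have p3 : 0 ≤ ∫ x, md α ((x / 8 + 1/2) / 4) ∂P := integral_nonneg (fun x => md_nonneg _ _)
      have p4 : (fun x => md α ((x / 4 + 3/4) / 4)) = fun x => md α (x / 16 + 3/16) := by
        ext x; congr 1; ring
      rw [p4]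
      linarith
    have o3 := piece_ge hP h1 (1/2 - a) (1/16) (3/16)
      (f := fun x => md α (x / 16 + 3/16)) (by ext x; congr 1; ring) (by
      intro x x0 x1 z hz
      by_cases hza : z = a
      · subst hza
        exact near_l (by linarith) (by linarith)
      rcases sep z hz hza with h' | h'
      · exact near_r h'.le (by linarith)
      · exact near_l (by linarith) (by linarith))
    nlinarith only [hopt, n1, n2, n3, o1, o2, o3, sq_nonneg (a - 17/48)]

lemma caseL0 {P : Measure ℝ} [IsProbabilityMeasure P] (hP : SelfSimilar P) {n : ℕ} (hn : 2 ≤ n)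
    {α : Finset ℝ} (hα : Opt P n α) (h : ∀ z ∈ α, z ≤ 1/2) : False := by
  obtain ⟨h1, h2, h3⟩ := hα
  have hcont := md_cont h1
  have hopt := h3 {1/6, 5/6} (by simp) (Finset.card_le_two.trans hn)
  rw [E_split hP (md_cont h1), E_split hP (md_cont (by simp))] at hopt
  have n1 := piece_le hP (β := {1/6, 5/6}) (c := 1/6) (by simp) (1/4) 0
      (f := fun x => md {1/6, 5/6} (x / 4)) (by ext x; congr 1; ring)
  have n2 := piece_le hP (β := {1/6, 5/6}) (c := 5/6) (by simp) (1/2) (1/2)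
      (f := fun x => md {1/6, 5/6} (x / 2 + 1/2)) (by ext x; congr 1; ring)
  have o1 : 0 ≤ ∫ x, md α (x / 4) ∂P := integral_nonneg (fun x => md_nonneg _ _)
  have o2 := piece_ge hP h1 (1/2) (1/2) (1/2)
      (f := fun x => md α (x / 2 + 1/2)) (by ext x; congr 1; ring) (by
    intro x x0 x1 z hz
    exact near_r (h z hz) (by linarith [h z hz]))
  linarith

lemma ineqK {P : Measure ℝ} [IsProbabilityMeasure P] (hP : SelfSimilar P) {a b : ℝ}
    (a1 : 1/4 < a) (a2 : a < 1/2) (b0 : 1 - a < b) (b1 : b ≤ 1) (b2 : 3/4 ≤ b) :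
    3/64 * (b - a) * Phi P (4 * (a + b - 1)) < 1/4 * (a - 1/6) ^ 2 + 3/4 * (b - 5/6) ^ 2 := by
  have pre : 0 ≤ 3/64 * (b - a) := by linarith
  rcases Phi_cases hP (u := a + b - 1) (by linarith) with ⟨u1, hφ⟩ | ⟨u0, u1, hφ⟩ | ⟨u0, hφ⟩
  · refine (mul_le_mul_of_nonneg_left hφ pre).trans_lt ?_
    nlinarith [sq_nonneg (b - 39/46), sq_nonneg (a - 1/4)]
  · refine (mul_le_mul_of_nonneg_left hφ pre).trans_lt ?_
    nlinarith [sq_nonneg (b - 7/8), sq_nonneg (a - 71/264)]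
  · refine (mul_le_mul_of_nonneg_left hφ pre).trans_lt ?_
    nlinarith [sq_nonneg (b - 11/12), sq_nonneg (a - 29/84)]

lemma caseK0 {P : Measure ℝ} [IsProbabilityMeasure P] (hP : SelfSimilar P) {n : ℕ} (hn : 2 ≤ n)
    {α : Finset ℝ} (hα : Opt P n α) {a b : ℝ} (ha : a ∈ α) (hbα : b ∈ α)
    (a1 : 1/4 < a) (a2 : a < 1/2) (b0 : 1 - a < b) (b1 : b ≤ 1)
    (sep : ∀ z ∈ α, z ≠ a → 1 - a < z)
    (hb : ∀ z ∈ α, 1 - a < z → b ≤ z) : False := by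
  obtain ⟨h1, h2, h3⟩ := hα
  have hcont := md_cont h1
  have hba : b ≠ a := by intro h; linarith
  have o1 := piece_ge hP h1 a (1/4) 0
      (f := fun x => md α (x / 4)) (by ext x; congr 1; ring) (by
    intro x x0 x1 z hz
    have hza : a ≤ z := by
      by_cases h : z = a
      · exact h.ge
      · linarith [sep z hz h]
    exact near_l hza (by linarith))
  rcases le_total b (3/4) with h34 | h34
  · have hs := mem_repl (α := α) (a := a) (y := 1/6)
    have hopt := h3 (insert (1/6) (α.erase a)) (Finset.insert_nonempty _ _) (card_repl h2 ha _)
    rw [E_split3 hP (md_cont h1), E_split3 hP (md_cont (Finset.insert_nonempty _ _))] at hopt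
    have c1 := piece_le hP (Finset.mem_insert_self (1/6) (α.erase a)) (1/4) 0
      (f := fun x => md (insert (1/6) (α.erase a)) (x / 4)) (by ext x; congr 1; ring)
    have c3 := up21 hP h1 (by linarith) hs (hs b hbα hba)
    have c4 := up22 hP h1 (by linarith) b1 a2.le hs (hs b hbα hba)
    have pre : 0 ≤ (b - a) / 4 := by linarith
    have hφ : Phi P (4 * (a + b - 1)) ≤ 4 * (a + b - 1) / 3 := by
      rcases Phi_cases hP (u := a + b - 1) (by linarith) with ⟨u1, hφ⟩ | ⟨u0, u1, hφ⟩ | ⟨u0, hφ⟩ <;>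
        linarith
    have hφ' := mul_le_mul_of_nonneg_left hφ pre
    have key : (b - a) / 4 * (4 * (a + b - 1) / 3) ≤ (3/4 - a) * (a - 1/4) / 3 := by
      nlinarith [mul_nonneg (sub_nonneg.2 h34) (show 0 ≤ a - 1/4 by linarith)]
    nlinarith
  · have o3 := piece_ge hP h1 b (1/4) (3/4)
      (f := fun x => md α (x / 4 + 3/4)) (by ext x; congr 1; ring)
    by_cases h3p : ∃ z ∈ α, z ≠ a ∧ z ≠ b
    · obtain ⟨z, hz, hza, hzb⟩ := h3p
      have hcard : 3 ≤ n := by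
        have hsub : ({a, b, z} : Finset ℝ) ⊆ α := by
          intro w hw
          simp only [Finset.mem_insert, Finset.mem_singleton] at hw
          rcases hw with rfl | rfl | rfl <;> assumption
        have := Finset.card_le_card hsub
        rw [Finset.card_eq_three.mpr ⟨a, b, z, hba.symm, hza.symm, hzb.symm, rfl⟩] at this
        omega
      have hopt := h3 {1/6, 7/12, 11/12} (by simp) (Finset.card_le_three.trans hcard)
      rw [E_split3 hP (md_cont h1), E_split3 hP (md_cont (by simp))] at hopt
      have n1 := piece_le hP (β := {1/6, 7/12, 11/12}) (c := 1/6) (by simp) (1/4) 0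
        (f := fun x => md {1/6, 7/12, 11/12} (x / 4)) (by ext x; congr 1; ring)
      have n2 := piece_le hP (β := {1/6, 7/12, 11/12}) (c := 7/12) (by simp) (1/8) (1/2)
        (f := fun x => md {1/6, 7/12, 11/12} (x / 8 + 1/2)) (by ext x; congr 1; ring)
      have n3 := piece_le hP (β := {1/6, 7/12, 11/12}) (c := 11/12) (by simp) (1/4) (3/4)
        (f := fun x => md {1/6, 7/12, 11/12} (x / 4 + 3/4)) (by ext x; congr 1; ring)
      have q3 : 0 ≤ ∫ x, md α (x / 4 + 3/4) ∂P := integral_nonneg (fun x => md_nonneg _ _)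
      rcases le_total a (3/8) with h | h
      · have q2 := E_ge hP (f := fun x => md α (x / 8 + 1/2)) (by fun_prop) 0 0 (1/64) (by
          intro x x0 x1
          refine le_md h1 (fun w hw => ?_)
          by_cases hwa : w = a
          · subst hwa; nlinarith
          · have := hb w hw (sep w hw hwa)
            nlinarith)
        nlinarith
      · have q2 : 0 ≤ ∫ x, md α (x / 8 + 1/2) ∂P := integral_nonneg (fun x => md_nonneg _ _)
        nlinarith
    · push Not at h3p
      have hopt := h3 {1/6, 5/6} (by simp) (Finset.card_le_two.trans hn)
      rw [E_split3 hP (md_cont h1), E_split hP (md_cont (by simp))] at hopt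
      have n1 := piece_le hP (β := {1/6, 5/6}) (c := 1/6) (by simp) (1/4) 0
        (f := fun x => md {1/6, 5/6} (x / 4)) (by ext x; congr 1; ring)
      have n2 := piece_le hP (β := {1/6, 5/6}) (c := 5/6) (by simp) (1/2) (1/2)
        (f := fun x => md {1/6, 5/6} (x / 2 + 1/2)) (by ext x; congr 1; ring)
      have o2 := low21 hP h1 a2 b0 (fun z hz hza => Or.inr (sep z hz hza)) a1 hb (by linarith)
      have o3' := o3 (by
        intro x x0 x1 z hz
        by_cases hza : z = a
        · subst hza; exact near_r (by linarith) (by linarith)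
        · rw [h3p z hz hza])
      have := ineqK hP a1 a2 b0 b1 h34
      nlinarith

theorem stmt_12 (P : Measure ℝ) [IsProbabilityMeasure P] (hP : SelfSimilar P)
    (n : ℕ) (hn : 2 ≤ n) (α : Finset ℝ) (hα : IsOptimal P n α) :
    ∀ a ∈ α, a ∉ Set.Ioo (1 / 4 : ℝ) (1 / 2) := by
  intro a ha ⟨a1, a2⟩
  have hopt := clamp_opt hP (opt_of hα)
  have ha' : a ∈ α.image (fun x => max 0 (min x 1)) := by
    refine Finset.mem_image.mpr ⟨a, ha, ?_⟩
    rw [min_eq_left (by linarith), max_eq_right (by linarith)]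
  have hrange : ∀ z ∈ α.image (fun x => max 0 (min x 1)), 0 ≤ z ∧ z ≤ 1 := by
    intro z hz
    obtain ⟨w, _, rfl⟩ := Finset.mem_image.mp hz
    exact ⟨le_max_left _ _, max_le (by norm_num) (min_le_right _ _)⟩
  generalize α.image (fun x => max 0 (min x 1)) = β at hopt ha' hrange
  have sep : ∀ z ∈ β, z ≠ a → z < 1/2 - a ∨ 1 - a < z :=
    fun z hz hza => separated hP hopt ha' a1 a2 hz hza
  by_cases hl : ∃ z ∈ β, 1 - a < z
  · obtain ⟨z0, hz0, hz0'⟩ := hl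
    obtain ⟨b, hbm, hbmin⟩ := Finset.exists_min_image (β.filter (fun z => 1 - a < z)) id
      ⟨z0, Finset.mem_filter.mpr ⟨hz0, hz0'⟩⟩
    obtain ⟨hbβ, b0⟩ := Finset.mem_filter.mp hbm
    have hb : ∀ z ∈ β, 1 - a < z → b ≤ z :=
      fun z hz h => hbmin z (Finset.mem_filter.mpr ⟨hz, h⟩)
    by_cases hk : ∃ z ∈ β, z < 1/2 - a
    · obtain ⟨z1, hz1, hz1'⟩ := hk
      obtain ⟨e, hem, hemax⟩ := Finset.exists_max_image (β.filter (fun z => z < 1/2 - a)) id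
        ⟨z1, Finset.mem_filter.mpr ⟨hz1, hz1'⟩⟩
      obtain ⟨heβ, e1⟩ := Finset.mem_filter.mp hem
      have he : ∀ z ∈ β, z < 1/2 - a → z ≤ e :=
        fun z hz h => hemax z (Finset.mem_filter.mpr ⟨hz, h⟩)
      rcases le_total a (3/8) with h | h
      · exact caseA hP hopt ha' heβ a1 h e1 sep
      · exact caseB hP hopt ha' hbβ heβ h a2 (hrange e heβ).1 e1 b0 (hrange b hbβ).2 sep he hb
    · push Not at hk
      exact caseK0 hP hn hopt ha' hbβ a1 a2 b0 (hrange b hbβ).2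
        (fun z hz hza => (sep z hz hza).resolve_left (not_lt.mpr (hk z hz))) hb
  · push Not at hl
    refine caseL0 hP hn hopt (fun z hz => ?_)
    by_cases hza : z = a
    · rw [hza]; exact a2.le
    · rcases sep z hz hza with h | h
      · linarith
      · linarith [hl z hz]
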